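/- For every behaviour P with M settings, the supremum of the local weight over all FHV models of P with setting distribution p is the same for every full-support setting distribution p; that is, for any two setting distributions p and p′ with p(x,y) > 0 and p′(x,y) > 0 for all x,y, sup{local weight of N : N an FHV model of P with setting distribution p} = sup{local weight of N : N an FHV model of P with setting distribution p′}. Consequently μ_L(P) equals the supremum of local weights of FHV models of P for any fixed full-support setting distribution. -/

import Mathlib

/-!
In an FHV model the conditional distributions `qc x y` all coincide with `q`, so the setting
distribution `p` enters only through the marginal identity `q l = ∑ qc x y l * p x y`, which
holds automatically for a normalised `p`. Hence the same data form an FHV model for any other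
setting distribution `p'`, with the same local points (`HVModel.IsFHV.changeDist`). The set of
achievable local weights is therefore independent of `p`, and the infimum defining `muL` is
that of a constant family.
-/

open scoped BigOperators Classical
open Finset

noncomputable section

/-- The real value `±1` associated with a Boolean outcome. -/
def outVal (a : Bool) : ℝ := if a then 1 else -1

/-- A behaviour: nonnegative probabilities summing to one for every pair of settings. -/
def IsBehaviour {M N : ℕ} (P : Bool → Bool → Fin M → Fin N → ℝ) : Prop :=
  (∀ a b x y, 0 ≤ P a b x y) ∧ (∀ x y, ∑ a, ∑ b, P a b x y = 1)

/-- A full-support probability distribution on pairs of settings. -/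
def IsSettingDist {M : ℕ} (p : Fin M → Fin M → ℝ) : Prop :=
  (∀ x y, 0 < p x y) ∧ ∑ x, ∑ y, p x y = 1

/-- A hidden-variable model of the behaviour `P` with setting distribution `p`,
with finite hidden-variable space `Fin n`. -/
structure HVModel (M : ℕ) (P : Bool → Bool → Fin M → Fin M → ℝ)
    (p : Fin M → Fin M → ℝ) where
  n : ℕ
  q : Fin n → ℝ
  q_nonneg : ∀ l, 0 ≤ q l
  q_sum : ∑ l, q l = 1
  qc : Fin M → Fin M → Fin n → ℝ
  qc_nonneg : ∀ x y l, 0 ≤ qc x y l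
  qc_sum : ∀ x y, ∑ l, qc x y l = 1
  q_marg : ∀ l, q l = ∑ x, ∑ y, qc x y l * p x y
  Pc : Fin n → Bool → Bool → Fin M → Fin M → ℝ
  Pc_nonneg : ∀ l a b x y, 0 ≤ Pc l a b x y
  Pc_sum : ∀ l x y, ∑ a, ∑ b, Pc l a b x y = 1
  reproduce : ∀ a b x y, P a b x y = ∑ l, Pc l a b x y * qc x y l

namespace HVModel

variable {M : ℕ} {P : Bool → Bool → Fin M → Fin M → ℝ} {p : Fin M → Fin M → ℝ}

/-- A hidden variable is local if the conditional outcome distribution factorises. -/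
def IsLocalPoint (N : HVModel M P p) (l : Fin N.n) : Prop :=
  ∃ α β : Bool → Fin M → ℝ,
    (∀ a x, 0 ≤ α a x) ∧ (∀ x, ∑ a, α a x = 1) ∧
    (∀ b y, 0 ≤ β b y) ∧ (∀ y, ∑ b, β b y = 1) ∧
    (∀ a b x y, N.Pc l a b x y = α a x * β b y)

/-- A hidden variable is free if it is independent of the settings. -/
def IsFreePoint (N : HVModel M P p) (l : Fin N.n) : Prop :=
  ∀ x y, N.qc x y l = N.q l

/-- The total weight of the local hidden variables. -/
def localWeight (N : HVModel M P p) : ℝ :=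
  ∑ l, if N.IsLocalPoint l then N.q l else 0

/-- The total weight of the free hidden variables. -/
def freeWeight (N : HVModel M P p) : ℝ :=
  ∑ l, if N.IsFreePoint l then N.q l else 0

/-- An FHV model: every hidden variable is free. -/
def IsFHV (N : HVModel M P p) : Prop := ∀ l, N.IsFreePoint l

/-- An LHV model: every hidden variable is local. -/
def IsLHV (N : HVModel M P p) : Prop := ∀ l, N.IsLocalPoint l

end HVModel

/-- Local weights achievable by FHV models of `P` with setting distribution `p`. -/
def FHVLocalWeights (M : ℕ) (P : Bool → Bool → Fin M → Fin M → ℝ)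
    (p : Fin M → Fin M → ℝ) : Set ℝ :=
  {w | ∃ N : HVModel M P p, N.IsFHV ∧ w = N.localWeight}

/-- Free weights achievable by LHV models of `P` with setting distribution `p`. -/
def LHVFreeWeights (M : ℕ) (P : Bool → Bool → Fin M → Fin M → ℝ)
    (p : Fin M → Fin M → ℝ) : Set ℝ :=
  {w | ∃ N : HVModel M P p, N.IsLHV ∧ w = N.freeWeight}

/-- The measure of locality `μ_L`. -/
def muL (M : ℕ) (P : Bool → Bool → Fin M → Fin M → ℝ) : ℝ :=
  ⨅ sp : {f : Fin M → Fin M → ℝ // IsSettingDist f}, sSup (FHVLocalWeights M P sp.1)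

/-- The measure of free choice `μ_F`. -/
def muF (M : ℕ) (P : Bool → Bool → Fin M → Fin M → ℝ) : ℝ :=
  ⨅ sp : {f : Fin M → Fin M → ℝ // IsSettingDist f}, sSup (LHVFreeWeights M P sp.1)

namespace HVModel

variable {M : ℕ} {P : Bool → Bool → Fin M → Fin M → ℝ} {p p' : Fin M → Fin M → ℝ}

/-- An FHV model regarded as a model for another normalised setting distribution `p'`, with all
other data unchanged. -/
def IsFHV.changeDist {N : HVModel M P p} (hN : N.IsFHV) (hp' : ∑ x, ∑ y, p' x y = 1) :
    HVModel M P p' :=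
  { N with
    q_marg := fun l => by
      have hfree : ∀ x y, N.qc x y l = N.q l := hN l
      simp only [hfree, ← Finset.mul_sum, hp', mul_one] }

end HVModel

theorem FHVLocalWeights_subset {M : ℕ} {P : Bool → Bool → Fin M → Fin M → ℝ}
    {p p' : Fin M → Fin M → ℝ} (hp' : IsSettingDist p') :
    FHVLocalWeights M P p ⊆ FHVLocalWeights M P p' := by
  rintro w ⟨N, hN, rfl⟩
  -- Freeness and locality of a point do not mention the setting distribution.
  exact ⟨hN.changeDist hp'.2, hN, rfl⟩

theorem FHVLocalWeights_eq {M : ℕ} {P : Bool → Bool → Fin M → Fin M → ℝ}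
    {p p' : Fin M → Fin M → ℝ} (hp : IsSettingDist p) (hp' : IsSettingDist p') :
    FHVLocalWeights M P p = FHVLocalWeights M P p' :=
  (FHVLocalWeights_subset hp').antisymm (FHVLocalWeights_subset hp)

theorem sup_FHV_localWeight_setting_independent (M : ℕ)
    (P : Bool → Bool → Fin M → Fin M → ℝ) (hP : IsBehaviour P) :
    (∀ p p' : Fin M → Fin M → ℝ, IsSettingDist p → IsSettingDist p' →
      sSup (FHVLocalWeights M P p) = sSup (FHVLocalWeights M P p')) ∧
    (∀ p : Fin M → Fin M → ℝ, IsSettingDist p →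
      muL M P = sSup (FHVLocalWeights M P p)) := by
  refine ⟨fun p p' hp hp' => by rw [FHVLocalWeights_eq hp hp'], fun p hp => ?_⟩
  -- The index type must be nonempty: the real infimum over an empty family is the junk value 0.
  have : Nonempty {f : Fin M → Fin M → ℝ // IsSettingDist f} := ⟨⟨p, hp⟩⟩
  have hconst : ∀ sp : {f : Fin M → Fin M → ℝ // IsSettingDist f},
      sSup (FHVLocalWeights M P sp.1) = sSup (FHVLocalWeights M P p) :=
    fun sp => by rw [FHVLocalWeights_eq sp.2 hp]
  simp only [muL, hconst, ciInf_const]
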